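/- Under Assumptions 1, 2, and 4, fix R ≥ 1 and run gradient descent on the empirical risk of a deep linear network with constant step size 1/β(R), where β(R) := 2L²R^{2L−2}(β+G). Then there exists a time t with W(t) ∉ B(R), i.e., max_{1≤k≤L} ‖W_k(t)‖_F > R. -/

import Mathlib

/-!
Suppose that all iterates stay in `B(R)`. For fixed input `v`, the output
`(W_L + Δ_L) ⋯ (W_1 + Δ_1) v` differs from its first-order expansion in `Δ` by a term quadratic in
`∑ ‖Δ_k‖`, with a constant depending on `R` (`remainder_bound`). Combined with the quadratic upper
bound for the scalar loss, this yields a quadratic upper bound for the risk between any two points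
of `B(R)` (`risk_descent`), so that each gradient step decreases the risk by at least
`η/2 * ‖∇R(W)‖²` (`risk_step`).

The initial gradient is nonzero, so from time `1` on the risk is bounded by some `r < ℓ 0`. Hence
some example always has margin at least a fixed `ε > 0`. The gradient for the first layer is the
outer product of `W_L ⋯ W_2` with the gradient of the risk in the linear predictor: the first factor
has norm at least `ε / R` because of that margin, and the second one is bounded below by pairing it
with the separator `u`, since `-ℓ'` has a positive minimum on the compact range of possible margins
(`gradNormSq_lower`). So the risk decreases by at least a fixed amount at every step,
which is impossible because it is nonnegative.
-/

open Matrix Filter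
open scoped BigOperators

noncomputable section

/-- Euclidean norm of a vector in `ℝ^m`. -/
def vecNorm {m : Type*} [Fintype m] (v : m → ℝ) : ℝ :=
  Real.sqrt (∑ i, (v i) ^ 2)

/-- Frobenius norm of a real matrix. -/
def frobNorm {m n : Type*} [Fintype m] [Fintype n] (M : Matrix m n ℝ) : ℝ :=
  Real.sqrt (∑ i, ∑ j, (M i j) ^ 2)

/-- Spectral norm (operator 2-norm) of a real matrix. -/
def specNorm {m n : Type*} [Fintype m] [Fintype n] (M : Matrix m n ℝ) : ℝ :=
  sSup {c : ℝ | ∃ v : n → ℝ, vecNorm v = 1 ∧ c = vecNorm (M.mulVec v)}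

/-- `(u, v)` is a top singular vector pair of `M`: both are unit vectors,
`M v = ‖M‖₂ u` and `Mᵀ u = ‖M‖₂ v`. -/
def IsTopSingularPair {m n : Type*} [Fintype m] [Fintype n]
    (M : Matrix m n ℝ) (u : m → ℝ) (v : n → ℝ) : Prop :=
  vecNorm u = 1 ∧ vecNorm v = 1 ∧
    M.mulVec v = specNorm M • u ∧ Mᵀ.mulVec u = specNorm M • v

/-- Parameters of a deep linear network: layer `k` (0-indexed; paper layer `k+1`)
is a matrix mapping `ℝ^{dim k}` to `ℝ^{dim (k+1)}`. -/
abbrev Layers (dim : ℕ → ℕ) := ∀ j : ℕ, Matrix (Fin (dim (j+1))) (Fin (dim j)) ℝ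

/-- Product `W_{j-1} ⋯ W_0` of the bottom `j` layers (paper: `W_j ⋯ W_1`). -/
def prodUpTo {dim : ℕ → ℕ} (W : Layers dim) : ∀ j : ℕ, Matrix (Fin (dim j)) (Fin (dim 0)) ℝ
  | 0 => 1
  | (j+1) => W j * prodUpTo W j

/-- Product `W_{L-1} ⋯ W_j` of the layers from `j` up to the top layer `L-1`
(paper: `W_L ⋯ W_{j+1}`); for `j ≥ L` it is a pseudo-identity. -/
def prodFrom {dim : ℕ → ℕ} (L : ℕ) (W : Layers dim) (j : ℕ) :
    Matrix (Fin (dim L)) (Fin (dim j)) ℝ :=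
  if h : j < L then prodFrom L W (j+1) * W j
  else Matrix.of fun i j' => if (i : ℕ) = (j' : ℕ) then 1 else 0
  termination_by L - j
  decreasing_by omega

/-- The linear predictor `w_prod = (W_L ⋯ W_1)ᵀ ∈ ℝ^d` induced by the network
(recall `dim L = 1`). -/
def wprod {dim : ℕ → ℕ} (L : ℕ) (W : Layers dim) : Fin (dim 0) → ℝ :=
  fun j => ∑ a, prodUpTo W L a j

/-- Empirical risk of a linear predictor `w`: `R(w) = (1/n) ∑ᵢ ℓ(⟨w, zᵢ⟩)`. -/
def riskV {n d : ℕ} (ℓ : ℝ → ℝ) (z : Fin n → Fin d → ℝ) (w : Fin d → ℝ) : ℝ :=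
  (n : ℝ)⁻¹ * ∑ i, ℓ (w ⬝ᵥ z i)

/-- Gradient of the risk w.r.t. the linear predictor: `∇R(w) = (1/n) ∑ᵢ ℓ'(⟨w, zᵢ⟩) zᵢ`. -/
def gradRiskV {n d : ℕ} (ℓ' : ℝ → ℝ) (z : Fin n → Fin d → ℝ) (w : Fin d → ℝ) :
    Fin d → ℝ :=
  (n : ℝ)⁻¹ • ∑ i, ℓ' (w ⬝ᵥ z i) • z i

/-- The partial gradient of the empirical risk with respect to layer `k`:
`∂R/∂W_k = (W_L ⋯ W_{k+1})ᵀ ∇R(w_prod)ᵀ (W_{k-1} ⋯ W_1)ᵀ`. -/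
def gradLayer {dim : ℕ → ℕ} (L : ℕ) (ℓ' : ℝ → ℝ) {n : ℕ}
    (z : Fin n → Fin (dim 0) → ℝ) (W : Layers dim) (k : ℕ) :
    Matrix (Fin (dim (k+1))) (Fin (dim k)) ℝ :=
  (prodFrom L W (k+1))ᵀ *
    (Matrix.of fun (_ : Fin (dim L)) (j : Fin (dim 0)) => gradRiskV ℓ' z (wprod L W) j) *
    (prodUpTo W k)ᵀ

/-- Empirical risk of the network. -/
def riskW {dim : ℕ → ℕ} (L : ℕ) (ℓ : ℝ → ℝ) {n : ℕ}
    (z : Fin n → Fin (dim 0) → ℝ) (W : Layers dim) : ℝ :=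
  riskV ℓ z (wprod L W)

/-- Gradient flow: `dW(t)/dt = −∇R(W(t))` for all `t ≥ 0`, entrywise on each layer. -/
def IsGradientFlow {dim : ℕ → ℕ} (L : ℕ) (ℓ' : ℝ → ℝ) {n : ℕ}
    (z : Fin n → Fin (dim 0) → ℝ) (W : ℝ → Layers dim) : Prop :=
  ∀ t : ℝ, 0 ≤ t → ∀ k < L, ∀ i j,
    HasDerivAt (fun s => W s k i j) (-(gradLayer L ℓ' z (W t) k i j)) t

/-- The initialization-dependent constant `D`. -/
def Dconst {dim : ℕ → ℕ} (L : ℕ) (W0 : Layers dim) : ℝ :=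
  (⨆ k : Fin L, frobNorm (W0 k) ^ 2) - frobNorm (W0 (L-1)) ^ 2
    + ∑ k ∈ Finset.range (L-1),
        specNorm (W0 k * (W0 k)ᵀ - (W0 (k+1))ᵀ * W0 (k+1))

/-- Euclidean norm of a parameter tuple (all entries of the first `L` layers concatenated). -/
def paramNorm {dim : ℕ → ℕ} (L : ℕ) (V : Layers dim) : ℝ :=
  Real.sqrt (∑ k ∈ Finset.range L, frobNorm (V k) ^ 2)

/-- Squared Euclidean norm of the full gradient `∇R(W)`. -/
def gradNormSq {dim : ℕ → ℕ} (L : ℕ) (ℓ' : ℝ → ℝ) {n : ℕ}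
    (z : Fin n → Fin (dim 0) → ℝ) (W : Layers dim) : ℝ :=
  ∑ k ∈ Finset.range L, frobNorm (gradLayer L ℓ' z W k) ^ 2

/-- The data-dependent constant `α = min_{‖ξ‖=1, ξ ⟂ ū} max_{i ∈ S} ⟨ξ, zᵢ⟩`,
where `S` is the set of support vectors. -/
def alphaConst {n d : ℕ} (z : Fin n → Fin d → ℝ) (ubar : Fin d → ℝ) (γ : ℝ) : ℝ :=
  sInf {c : ℝ | ∃ ξ : Fin d → ℝ, vecNorm ξ = 1 ∧ ξ ⬝ᵥ ubar = 0 ∧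
    c = sSup {r : ℝ | ∃ i : Fin n, ubar ⬝ᵥ z i = γ ∧ r = ξ ⬝ᵥ z i}}

/-- Orthogonal projection onto the orthogonal complement of `span(ū)` (for `ū` a unit vector). -/
def projPerp {d : ℕ} (ubar : Fin d → ℝ) (w : Fin d → ℝ) : Fin d → ℝ :=
  w - (w ⬝ᵥ ubar) • ubar

/-! ### Euclidean and Frobenius norms -/

lemma vecNorm_eq_norm {m : Type*} [Fintype m] (v : m → ℝ) :
    vecNorm v = ‖WithLp.toLp 2 v‖ := by
  simp [vecNorm, EuclideanSpace.norm_eq]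

lemma vecNorm_nonneg {m : Type*} [Fintype m] (v : m → ℝ) : 0 ≤ vecNorm v :=
  Real.sqrt_nonneg _

lemma frobNorm_nonneg {m n : Type*} [Fintype m] [Fintype n] (M : Matrix m n ℝ) :
    0 ≤ frobNorm M :=
  Real.sqrt_nonneg _

lemma vecNorm_sq {m : Type*} [Fintype m] (v : m → ℝ) : vecNorm v ^ 2 = ∑ i, v i ^ 2 :=
  Real.sq_sqrt (by positivity)

lemma frobNorm_sq {m n : Type*} [Fintype m] [Fintype n] (M : Matrix m n ℝ) :
    frobNorm M ^ 2 = ∑ i, ∑ j, M i j ^ 2 :=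
  Real.sq_sqrt (by positivity)

lemma vecNorm_add_le {m : Type*} [Fintype m] (v w : m → ℝ) :
    vecNorm (v + w) ≤ vecNorm v + vecNorm w := by
  simp only [vecNorm_eq_norm, WithLp.toLp_add]
  exact norm_add_le _ _

lemma vecNorm_zero {m : Type*} [Fintype m] : vecNorm (0 : m → ℝ) = 0 := by
  simp [vecNorm]

lemma vecNorm_smul {m : Type*} [Fintype m] (c : ℝ) (v : m → ℝ) :
    vecNorm (c • v) = |c| * vecNorm v := by
  simp only [vecNorm_eq_norm, WithLp.toLp_smul, norm_smul, Real.norm_eq_abs]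

lemma abs_dotProduct_le {m : Type*} [Fintype m] (v w : m → ℝ) :
    |v ⬝ᵥ w| ≤ vecNorm v * vecNorm w := by
  apply abs_le_of_sq_le_sq _ (mul_nonneg (vecNorm_nonneg _) (vecNorm_nonneg _))
  rw [mul_pow, vecNorm_sq, vecNorm_sq]
  exact Finset.sum_mul_sq_le_sq_mul_sq _ _ _

lemma vecNorm_mulVec_le {m n : Type*} [Fintype m] [Fintype n] (M : Matrix m n ℝ) (v : n → ℝ) :
    vecNorm (M *ᵥ v) ≤ frobNorm M * vecNorm v := by
  refine (le_abs_self _).trans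
    (abs_le_of_sq_le_sq ?_ (mul_nonneg (frobNorm_nonneg _) (vecNorm_nonneg _)))
  rw [mul_pow, vecNorm_sq, vecNorm_sq, frobNorm_sq, Finset.sum_mul]
  exact Finset.sum_le_sum fun i _ => Finset.sum_mul_sq_le_sq_mul_sq _ _ _

lemma frobNorm_sq_smul {m n : Type*} [Fintype m] [Fintype n] (c : ℝ) (M : Matrix m n ℝ) :
    frobNorm (c • M) ^ 2 = c ^ 2 * frobNorm M ^ 2 := by
  simp only [frobNorm_sq, Matrix.smul_apply, smul_eq_mul, mul_pow, Finset.mul_sum]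

lemma frobNorm_sq_vecMulVec {m n : Type*} [Fintype m] [Fintype n] (v : m → ℝ) (w : n → ℝ) :
    frobNorm (vecMulVec v w) ^ 2 = vecNorm v ^ 2 * vecNorm w ^ 2 := by
  simp only [frobNorm_sq, vecNorm_sq, vecMulVec_apply, mul_pow, Finset.sum_mul_sum]

lemma frobNorm_sq_pos {m n : Type*} [Fintype m] [Fintype n] {M : Matrix m n ℝ} (h : M ≠ 0) :
    0 < frobNorm M ^ 2 := by
  rw [frobNorm_sq]
  by_contra! hle
  apply h
  ext i j
  have h0 : ∑ i, ∑ j, M i j ^ 2 = 0 := le_antisymm hle (by positivity)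
  rw [Finset.sum_eq_zero_iff_of_nonneg (fun i _ => by positivity)] at h0
  have h1 := h0 i (Finset.mem_univ _)
  rw [Finset.sum_eq_zero_iff_of_nonneg (fun i _ => by positivity)] at h1
  simpa using h1 j (Finset.mem_univ _)

/-- In dimension one the sum of the coordinates is the only coordinate. -/
lemma abs_sum_le_vecNorm {k : ℕ} (hk : k = 1) (v : Fin k → ℝ) : |∑ a, v a| ≤ vecNorm v := by
  subst hk
  simp [vecNorm, Real.sqrt_sq_eq_abs]

/-! ### Perturbing the layers of the network -/

/-- The part of first order in `Δ` of `(W_{j-1} + Δ_{j-1}) ⋯ (W_0 + Δ_0) v`. -/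
def linPart {dim : ℕ → ℕ} (W Δ : Layers dim) (v : Fin (dim 0) → ℝ) : ∀ j, Fin (dim j) → ℝ
  | 0 => 0
  | (j+1) => W j *ᵥ linPart W Δ v j + Δ j *ᵥ (prodUpTo W j *ᵥ v)

lemma prodUpTo_succ_mulVec {dim : ℕ → ℕ} (W : Layers dim) (v : Fin (dim 0) → ℝ) (j : ℕ) :
    prodUpTo W (j+1) *ᵥ v = W j *ᵥ (prodUpTo W j *ᵥ v) := by
  rw [prodUpTo, mulVec_mulVec]

lemma prodUpTo_bound {dim : ℕ → ℕ} {L : ℕ} {R : ℝ} (hR : 0 ≤ R) (W : Layers dim)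
    (hW : ∀ k < L, frobNorm (W k) ≤ R) (v : Fin (dim 0) → ℝ) (hv : vecNorm v ≤ 1) :
    ∀ j ≤ L, vecNorm (prodUpTo W j *ᵥ v) ≤ R ^ j := by
  intro j
  induction j with
  | zero => intro _; simpa [prodUpTo] using hv
  | succ j ih =>
    intro hj
    rw [prodUpTo_succ_mulVec, pow_succ']
    exact (vecNorm_mulVec_le _ _).trans
      (mul_le_mul (hW j (by omega)) (ih (by omega)) (vecNorm_nonneg _) hR)

/-- Bound on the change of the output: the extra factor `R` on the left encodes the bound
`R^(j-1) * ∑ ‖Δ_k‖` without a truncated exponent. -/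
lemma prodUpTo_diff_bound {dim : ℕ → ℕ} {L : ℕ} {R : ℝ} (hR : 0 ≤ R) (W W' Δ : Layers dim)
    (hΔ : ∀ k < L, W' k = W k + Δ k)
    (hW : ∀ k < L, frobNorm (W k) ≤ R) (hW' : ∀ k < L, frobNorm (W' k) ≤ R)
    (v : Fin (dim 0) → ℝ) (hv : vecNorm v ≤ 1) :
    ∀ j ≤ L, R * vecNorm (prodUpTo W' j *ᵥ v - prodUpTo W j *ᵥ v)
      ≤ R ^ j * ∑ k ∈ Finset.range j, frobNorm (Δ k) := by
  intro j
  induction j with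
  | zero => intro _; simp [prodUpTo, vecNorm_zero]
  | succ j ih =>
    intro hj
    have ih := ih (by omega)
    have ha := prodUpTo_bound hR W hW v hv j (by omega)
    have hsplit : prodUpTo W' (j+1) *ᵥ v - prodUpTo W (j+1) *ᵥ v
        = W' j *ᵥ (prodUpTo W' j *ᵥ v - prodUpTo W j *ᵥ v) + Δ j *ᵥ (prodUpTo W j *ᵥ v) := by
      rw [prodUpTo_succ_mulVec, prodUpTo_succ_mulVec, mulVec_sub, hΔ j (by omega), add_mulVec,
        add_mulVec]
      abel
    rw [hsplit, Finset.sum_range_succ]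
    have h1 := vecNorm_add_le (W' j *ᵥ (prodUpTo W' j *ᵥ v - prodUpTo W j *ᵥ v))
      (Δ j *ᵥ (prodUpTo W j *ᵥ v))
    have h2 : vecNorm (W' j *ᵥ (prodUpTo W' j *ᵥ v - prodUpTo W j *ᵥ v))
        ≤ R * vecNorm (prodUpTo W' j *ᵥ v - prodUpTo W j *ᵥ v) :=
      (vecNorm_mulVec_le _ _).trans
        (mul_le_mul_of_nonneg_right (hW' j (by omega)) (vecNorm_nonneg _))
    have h3 : vecNorm (Δ j *ᵥ (prodUpTo W j *ᵥ v)) ≤ frobNorm (Δ j) * R ^ j :=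
      (vecNorm_mulVec_le _ _).trans (mul_le_mul_of_nonneg_left ha (frobNorm_nonneg _))
    calc R * vecNorm _ ≤ R * (R ^ j * ∑ k ∈ Finset.range j, frobNorm (Δ k)
            + frobNorm (Δ j) * R ^ j) :=
          mul_le_mul_of_nonneg_left (by linarith) hR
      _ = _ := by ring

/-- Second-order bound: `‖remainder‖ ≤ R^(j-2) * (∑ ‖Δ_k‖)^2`, multiplied by `R^2`. -/
lemma remainder_bound {dim : ℕ → ℕ} {L : ℕ} {R : ℝ} (hR : 0 ≤ R) (W W' Δ : Layers dim)
    (hΔ : ∀ k < L, W' k = W k + Δ k)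
    (hW : ∀ k < L, frobNorm (W k) ≤ R) (hW' : ∀ k < L, frobNorm (W' k) ≤ R)
    (v : Fin (dim 0) → ℝ) (hv : vecNorm v ≤ 1) :
    ∀ j ≤ L, R ^ 2 * vecNorm (prodUpTo W' j *ᵥ v - prodUpTo W j *ᵥ v - linPart W Δ v j)
      ≤ R ^ j * (∑ k ∈ Finset.range j, frobNorm (Δ k)) ^ 2 := by
  intro j
  induction j with
  | zero => intro _; simp [prodUpTo, vecNorm_zero, linPart]
  | succ j ih =>
    intro hj
    have ih := ih (by omega)
    have hd := prodUpTo_diff_bound hR W W' Δ hΔ hW hW' v hv j (by omega)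
    have hsplit : prodUpTo W' (j+1) *ᵥ v - prodUpTo W (j+1) *ᵥ v - linPart W Δ v (j+1)
        = W j *ᵥ (prodUpTo W' j *ᵥ v - prodUpTo W j *ᵥ v - linPart W Δ v j)
          + Δ j *ᵥ (prodUpTo W' j *ᵥ v - prodUpTo W j *ᵥ v) := by
      rw [prodUpTo_succ_mulVec, prodUpTo_succ_mulVec, linPart, mulVec_sub, mulVec_sub, mulVec_sub,
        hΔ j (by omega), add_mulVec]
      abel
    rw [hsplit, Finset.sum_range_succ]
    set D := ∑ k ∈ Finset.range j, frobNorm (Δ k) with hD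
    have hD0 : 0 ≤ D := Finset.sum_nonneg fun _ _ => frobNorm_nonneg _
    have hδ0 := frobNorm_nonneg (Δ j)
    set p := prodUpTo W' j *ᵥ v - prodUpTo W j *ᵥ v
    set r := p - linPart W Δ v j
    have h1 := vecNorm_add_le (W j *ᵥ r) (Δ j *ᵥ p)
    have h2 : vecNorm (W j *ᵥ r) ≤ R * vecNorm r :=
      (vecNorm_mulVec_le _ _).trans
        (mul_le_mul_of_nonneg_right (hW j (by omega)) (vecNorm_nonneg _))
    have h3 := vecNorm_mulVec_le (Δ j) p
    have hRj : 0 ≤ R ^ (j+1) := by positivity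
    calc R ^ 2 * vecNorm (W j *ᵥ r + Δ j *ᵥ p)
        ≤ R ^ 2 * (R * vecNorm r + frobNorm (Δ j) * vecNorm p) :=
          mul_le_mul_of_nonneg_left (by linarith) (by positivity)
      _ = R * (R ^ 2 * vecNorm r) + R * frobNorm (Δ j) * (R * vecNorm p) := by ring
      _ ≤ R * (R ^ j * D ^ 2) + R * frobNorm (Δ j) * (R ^ j * D) := by gcongr
      _ = R ^ (j+1) * (D ^ 2 + D * frobNorm (Δ j)) := by ring
      _ ≤ R ^ (j+1) * (D + frobNorm (Δ j)) ^ 2 :=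
          mul_le_mul_of_nonneg_left (by nlinarith [mul_nonneg hD0 hδ0]) hRj

lemma prodFrom_of_lt {dim : ℕ → ℕ} {L j : ℕ} (W : Layers dim) (h : j < L) :
    prodFrom L W j = prodFrom L W (j+1) * W j := by
  rw [prodFrom, dif_pos h]

lemma prodFrom_self {dim : ℕ → ℕ} (L : ℕ) (W : Layers dim) : prodFrom L W L = 1 := by
  rw [prodFrom, dif_neg (lt_irrefl L)]
  ext i j
  simp [Matrix.one_apply, Fin.ext_iff]

lemma prodFrom_mulVec_linPart {dim : ℕ → ℕ} (L : ℕ) (W Δ : Layers dim) (v : Fin (dim 0) → ℝ) :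
    ∀ j ≤ L, prodFrom L W j *ᵥ linPart W Δ v j
      = ∑ k ∈ Finset.range j, prodFrom L W (k+1) *ᵥ (Δ k *ᵥ (prodUpTo W k *ᵥ v)) := by
  intro j
  induction j with
  | zero => intro _; simp [linPart]
  | succ j ih =>
    intro hj
    rw [Finset.sum_range_succ, ← ih (by omega), linPart, mulVec_add, prodFrom_of_lt W hj,
      ← mulVec_mulVec]

lemma prodFrom_mul_prodUpTo {dim : ℕ → ℕ} (L : ℕ) (W : Layers dim) :
    ∀ j ≤ L, prodFrom L W j * prodUpTo W j = prodFrom L W 0 := by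
  intro j
  induction j with
  | zero => intro _; simp [prodUpTo]
  | succ j ih =>
    intro hj
    rw [← ih (by omega), prodUpTo, prodFrom_of_lt W hj, Matrix.mul_assoc]

lemma wprod_dotProduct {dim : ℕ → ℕ} (L : ℕ) (W : Layers dim) (v : Fin (dim 0) → ℝ) :
    wprod L W ⬝ᵥ v = ∑ a, (prodUpTo W L *ᵥ v) a := by
  simp only [wprod, dotProduct, mulVec, Finset.sum_mul]
  exact Finset.sum_comm

/-! ### The layer gradients -/

/-- The sum of the rows of `W_L ⋯ W_{k+1}`; since `dim L = 1`, this is its unique row. -/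
def topVec {dim : ℕ → ℕ} (L : ℕ) (W : Layers dim) (k : ℕ) : Fin (dim k) → ℝ :=
  fun i => ∑ a, prodFrom L W k a i

lemma topVec_dotProduct {dim : ℕ → ℕ} (L : ℕ) (W : Layers dim) (k : ℕ) (v : Fin (dim k) → ℝ) :
    topVec L W k ⬝ᵥ v = ∑ a, (prodFrom L W k *ᵥ v) a := by
  simp only [topVec, dotProduct, mulVec, Finset.sum_mul]
  exact Finset.sum_comm

/-- Each layer gradient has rank at most one. -/
lemma gradLayer_eq {dim : ℕ → ℕ} (L : ℕ) (ℓ' : ℝ → ℝ) {n : ℕ}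
    (z : Fin n → Fin (dim 0) → ℝ) (W : Layers dim) (k : ℕ) :
    gradLayer L ℓ' z W k
      = vecMulVec (topVec L W (k+1)) (prodUpTo W k *ᵥ gradRiskV ℓ' z (wprod L W)) := by
  ext i j
  simp only [gradLayer, Matrix.mul_apply, transpose_apply, of_apply, vecMulVec_apply, topVec,
    mulVec, dotProduct, Finset.mul_sum, Finset.sum_mul]
  exact Finset.sum_congr rfl fun _ _ => Finset.sum_congr rfl fun _ _ => by ring

/-- The first-order change of the risk is the Frobenius pairing with the layer gradients. -/
lemma sum_linPart_eq {dim : ℕ → ℕ} (L : ℕ) (ℓ' : ℝ → ℝ) {n : ℕ}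
    (z : Fin n → Fin (dim 0) → ℝ) (W Δ : Layers dim) :
    (n : ℝ)⁻¹ * ∑ i, ℓ' (wprod L W ⬝ᵥ z i) * ∑ a, linPart W Δ (z i) L a
      = ∑ k ∈ Finset.range L, ∑ p, ∑ q, gradLayer L ℓ' z W k p q * Δ k p q := by
  have h1 : ∀ v, ∑ a, linPart W Δ v L a
      = ∑ k ∈ Finset.range L, topVec L W (k+1) ⬝ᵥ (Δ k *ᵥ (prodUpTo W k *ᵥ v)) := by
    intro v
    have h := prodFrom_mulVec_linPart L W Δ v L le_rfl
    rw [prodFrom_self, one_mulVec] at h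
    simp only [h, topVec_dotProduct, Finset.sum_apply]
    exact Finset.sum_comm
  have h2 : ∀ k, ∑ p, ∑ q, gradLayer L ℓ' z W k p q * Δ k p q
      = topVec L W (k+1) ⬝ᵥ (Δ k *ᵥ (prodUpTo W k *ᵥ gradRiskV ℓ' z (wprod L W))) := by
    intro k
    rw [gradLayer_eq]
    generalize prodUpTo W k *ᵥ gradRiskV ℓ' z (wprod L W) = b
    simp only [vecMulVec_apply, dotProduct, mulVec, Finset.mul_sum]
    exact Finset.sum_congr rfl fun _ _ => Finset.sum_congr rfl fun _ _ => by ring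
  simp only [h1, h2, gradRiskV, mulVec_smul, mulVec_sum, dotProduct_smul, dotProduct_sum,
    smul_eq_mul, ← Finset.mul_sum]
  congr 1
  rw [Finset.sum_comm]
  simp only [Finset.mul_sum]

/-! ### Descent of the risk -/

lemma loss_descent {ℓ ℓ' : ℝ → ℝ} {β : ℝ} (hβ0 : 0 ≤ β)
    (hderiv : ∀ s : ℝ, HasDerivAt ℓ (ℓ' s) s)
    (hβ : ∀ a b : ℝ, |ℓ' a - ℓ' b| ≤ β * |a - b|) (a b : ℝ) :
    ℓ b ≤ ℓ a + ℓ' a * (b - a) + β * (b - a) ^ 2 := by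
  have h := (convex_uIcc a b).norm_image_sub_le_of_norm_hasDerivWithin_le
    (f := fun s => ℓ s - ℓ' a * s) (f' := fun s => ℓ' s - ℓ' a) (C := β * |b - a|)
    (fun s _ => ((hderiv s).sub (by simpa using (hasDerivAt_id s).const_mul (ℓ' a))).hasDerivWithinAt)
    (fun s hs => by
      rw [Real.norm_eq_abs]
      exact (hβ s a).trans (mul_le_mul_of_nonneg_left (Set.abs_sub_left_of_mem_uIcc hs) hβ0))
    Set.left_mem_uIcc Set.right_mem_uIcc
  have h2 := (abs_le.1 h).2
  simp only [Real.norm_eq_abs] at h2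
  have h3 : β * |b - a| * |b - a| = β * (b - a) ^ 2 := by
    rw [mul_assoc, ← sq, sq_abs]
  linarith

/-- Quadratic upper bound on the risk along a step between two points of the ball `B(R)`. -/
lemma risk_descent {dim : ℕ → ℕ} {L n : ℕ} (hL : 1 ≤ L) (hdimL : dim L = 1) (hn : 0 < n)
    (z : Fin n → Fin (dim 0) → ℝ) (hz : ∀ i, vecNorm (z i) ≤ 1)
    {ℓ ℓ' : ℝ → ℝ} {β G R : ℝ} (hβ0 : 0 ≤ β) (hR : 1 ≤ R)
    (hderiv : ∀ s : ℝ, HasDerivAt ℓ (ℓ' s) s)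
    (hβ : ∀ a b : ℝ, |ℓ' a - ℓ' b| ≤ β * |a - b|) (hG : ∀ a : ℝ, |ℓ' a| ≤ G)
    (W W' Δ : Layers dim) (hΔ : ∀ k < L, W' k = W k + Δ k)
    (hW : ∀ k < L, frobNorm (W k) ≤ R) (hW' : ∀ k < L, frobNorm (W' k) ≤ R) :
    riskW L ℓ z W' ≤ riskW L ℓ z W
      + ∑ k ∈ Finset.range L, ∑ p, ∑ q, gradLayer L ℓ' z W k p q * Δ k p q
      + (β + G) * R ^ (2 * L - 2) * (L * ∑ k ∈ Finset.range L, frobNorm (Δ k) ^ 2) := by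
  have hR0 : 0 < R := by linarith
  have hG0 : 0 ≤ G := (abs_nonneg _).trans (hG 0)
  set D := ∑ k ∈ Finset.range L, frobNorm (Δ k) with hD
  have hD0 : 0 ≤ D := Finset.sum_nonneg fun _ _ => frobNorm_nonneg _
  set S := ∑ k ∈ Finset.range L, frobNorm (Δ k) ^ 2
  have hDS : D ^ 2 ≤ L * S := by
    simpa using sq_sum_le_card_mul_sum_sq (s := Finset.range L) (f := fun k => frobNorm (Δ k))
  set E := (β + G) * R ^ (2 * L - 2) * (L * S) with hE
  have hpow : R ^ 2 * R ^ (2 * L - 2) = (R ^ L) ^ 2 := by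
    rw [← pow_add, ← pow_mul]; congr 1; omega
  have hpt : ∀ i, ℓ (wprod L W' ⬝ᵥ z i) ≤ ℓ (wprod L W ⬝ᵥ z i)
      + ℓ' (wprod L W ⬝ᵥ z i) * ∑ a, linPart W Δ (z i) L a + E := by
    intro i
    set s := wprod L W ⬝ᵥ z i with hs
    set s' := wprod L W' ⬝ᵥ z i with hs'
    set l := ∑ a, linPart W Δ (z i) L a with hl
    have hdiff : |s' - s| ≤ vecNorm (prodUpTo W' L *ᵥ z i - prodUpTo W L *ᵥ z i) := by
      rw [hs, hs', wprod_dotProduct, wprod_dotProduct, ← Finset.sum_sub_distrib]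
      exact abs_sum_le_vecNorm hdimL (prodUpTo W' L *ᵥ z i - prodUpTo W L *ᵥ z i)
    have hrem : |s' - s - l|
        ≤ vecNorm (prodUpTo W' L *ᵥ z i - prodUpTo W L *ᵥ z i - linPart W Δ (z i) L) := by
      rw [hs, hs', hl, wprod_dotProduct, wprod_dotProduct, ← Finset.sum_sub_distrib,
        ← Finset.sum_sub_distrib]
      exact abs_sum_le_vecNorm hdimL
        (prodUpTo W' L *ᵥ z i - prodUpTo W L *ᵥ z i - linPart W Δ (z i) L)
    have h1 := prodUpTo_diff_bound hR0.le W W' Δ hΔ hW hW' (z i) (hz i) L le_rfl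
    have h2 := remainder_bound hR0.le W W' Δ hΔ hW hW' (z i) (hz i) L le_rfl
    have hsq : (s' - s) ^ 2 ≤ R ^ (2 * L - 2) * D ^ 2 := by
      have h3 : R * |s' - s| ≤ R ^ L * D := (mul_le_mul_of_nonneg_left hdiff hR0.le).trans h1
      have h4 : (R * |s' - s|) ^ 2 ≤ (R ^ L * D) ^ 2 := by gcongr
      rw [mul_pow, mul_pow, sq_abs, ← hpow, mul_assoc] at h4
      exact le_of_mul_le_mul_left h4 (by positivity)
    have hr : |s' - s - l| ≤ R ^ (2 * L - 2) * D ^ 2 := by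
      have h3 : R ^ 2 * |s' - s - l| ≤ R ^ L * D ^ 2 :=
        (mul_le_mul_of_nonneg_left hrem (by positivity)).trans h2
      have h4 : R ^ L ≤ (R ^ L) ^ 2 := le_self_pow₀ (one_le_pow₀ hR) two_ne_zero
      have h5 : R ^ L * D ^ 2 ≤ (R ^ L) ^ 2 * D ^ 2 := by gcongr
      rw [← hpow, mul_assoc] at h5
      exact le_of_mul_le_mul_left (h3.trans h5) (by positivity)
    have hd := loss_descent hβ0 hderiv hβ s s'
    have hg : ℓ' s * (s' - s - l) ≤ G * (R ^ (2 * L - 2) * D ^ 2) :=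
      (le_abs_self _).trans (by rw [abs_mul]; exact mul_le_mul (hG s) hr (abs_nonneg _) hG0)
    have hq : β * (s' - s) ^ 2 ≤ β * (R ^ (2 * L - 2) * D ^ 2) :=
      mul_le_mul_of_nonneg_left hsq hβ0
    have hEE : (β + G) * R ^ (2 * L - 2) * D ^ 2 ≤ E :=
      mul_le_mul_of_nonneg_left hDS (by positivity)
    linarith
  have hn' : (0 : ℝ) < n := by exact_mod_cast hn
  rw [← sum_linPart_eq]
  simp only [riskW, riskV]
  calc (n : ℝ)⁻¹ * ∑ i, ℓ (wprod L W' ⬝ᵥ z i)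
      ≤ (n : ℝ)⁻¹ * ∑ i, (ℓ (wprod L W ⬝ᵥ z i)
          + ℓ' (wprod L W ⬝ᵥ z i) * ∑ a, linPart W Δ (z i) L a + E) :=
        mul_le_mul_of_nonneg_left (Finset.sum_le_sum fun i _ => hpt i) (by positivity)
    _ = _ := by
        rw [Finset.sum_add_distrib, Finset.sum_add_distrib, Finset.sum_const, Finset.card_univ,
          Fintype.card_fin, nsmul_eq_mul]
        field_simp

/-- One gradient step inside the ball decreases the risk by at least `η/2 * ‖∇R‖²`. -/
lemma risk_step {dim : ℕ → ℕ} {L n : ℕ} (hL : 1 ≤ L) (hdimL : dim L = 1) (hn : 0 < n)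
    (z : Fin n → Fin (dim 0) → ℝ) (hz : ∀ i, vecNorm (z i) ≤ 1)
    {ℓ ℓ' : ℝ → ℝ} {β G R : ℝ} (hβ0 : 0 ≤ β) (hG0 : 0 < G) (hR : 1 ≤ R)
    (hderiv : ∀ s : ℝ, HasDerivAt ℓ (ℓ' s) s)
    (hβ : ∀ a b : ℝ, |ℓ' a - ℓ' b| ≤ β * |a - b|) (hG : ∀ a : ℝ, |ℓ' a| ≤ G)
    (W W' : Layers dim) {η : ℝ}
    (hη : η = (2 * (L : ℝ)^2 * R^(2*L-2) * (β + G))⁻¹)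
    (hstep : ∀ k < L, W' k = W k - η • gradLayer L ℓ' z W k)
    (hW : ∀ k < L, frobNorm (W k) ≤ R) (hW' : ∀ k < L, frobNorm (W' k) ≤ R) :
    riskW L ℓ z W' ≤ riskW L ℓ z W - η / 2 * gradNormSq L ℓ' z W := by
  have hL1 : (1 : ℝ) ≤ L := by exact_mod_cast hL
  have hR0 : 0 < R := by linarith
  have hη0 : 0 < η := by rw [hη]; positivity
  have h := risk_descent hL hdimL hn z hz hβ0 hR hderiv hβ hG W W'
    (fun k => (-η) • gradLayer L ℓ' z W k)
    (fun k hk => by rw [hstep k hk, neg_smul, sub_eq_add_neg]) hW hW'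
  have h1 : ∑ k ∈ Finset.range L, ∑ p, ∑ q,
      gradLayer L ℓ' z W k p q * ((-η) • gradLayer L ℓ' z W k) p q
      = -η * gradNormSq L ℓ' z W := by
    simp only [gradNormSq, frobNorm_sq, Finset.mul_sum, Matrix.smul_apply, smul_eq_mul]
    refine Finset.sum_congr rfl fun _ _ => Finset.sum_congr rfl fun _ _ =>
      Finset.sum_congr rfl fun _ _ => by ring
  have h2 : ∑ k ∈ Finset.range L, frobNorm ((-η) • gradLayer L ℓ' z W k) ^ 2
      = η ^ 2 * gradNormSq L ℓ' z W := by
    simp only [frobNorm_sq_smul, neg_sq, gradNormSq, Finset.mul_sum]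
  rw [h1, h2] at h
  have hS : 0 ≤ gradNormSq L ℓ' z W := Finset.sum_nonneg fun _ _ => sq_nonneg _
  have h3 : (β + G) * R ^ (2 * L - 2) * L * η ≤ 1 / 2 := by
    have : (β + G) * R ^ (2 * L - 2) * L * η = 1 / (2 * L) := by
      rw [hη]; field_simp
    rw [this]
    exact one_div_le_one_div_of_le two_pos (by linarith)
  have h4 : (β + G) * R ^ (2 * L - 2) * (L * (η ^ 2 * gradNormSq L ℓ' z W))
      ≤ 1 / 2 * (η * gradNormSq L ℓ' z W) := by
    have := mul_le_mul_of_nonneg_right h3 (mul_nonneg hη0.le hS)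
    linarith
  linarith

/-! ### Lower bound on the gradient -/

lemma vecNorm_z_le {d : ℕ} {x z : Fin d → ℝ} {y : ℝ} (hx : vecNorm x ≤ 1)
    (hy : y = 1 ∨ y = -1) (hz : z = y • x) : vecNorm z ≤ 1 := by
  rw [hz, vecNorm_smul]
  rcases hy with rfl | rfl <;> simpa using hx

/-- If the predictor has margin more than `ε` on some example, then the first-layer gradient is
bounded below: its two rank-one factors are controlled by the margin and by separability. -/
lemma gradNormSq_lower {dim : ℕ → ℕ} {L n : ℕ} (hL : 1 ≤ L) (hn : 0 < n)
    (z : Fin n → Fin (dim 0) → ℝ) (hz : ∀ i, vecNorm (z i) ≤ 1)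
    {ℓ' : ℝ → ℝ} {R ε γ M : ℝ} (hR : 0 < R) (hε : 0 < ε) (hγ : 0 < γ) (hM : 0 < M)
    (usep : Fin (dim 0) → ℝ) (hu : vecNorm usep = 1) (hmargin : ∀ i, γ ≤ usep ⬝ᵥ z i)
    (W : Layers dim) (hW : ∀ k < L, frobNorm (W k) ≤ R)
    (hℓ' : ∀ i, M ≤ -ℓ' (wprod L W ⬝ᵥ z i)) (hex : ∃ i, ε ≤ wprod L W ⬝ᵥ z i) :
    (ε / R) ^ 2 * (γ * M) ^ 2 ≤ gradNormSq L ℓ' z W := by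
  have hn' : (0 : ℝ) < n := by exact_mod_cast hn
  have hterm : frobNorm (gradLayer L ℓ' z W 0) ^ 2 ≤ gradNormSq L ℓ' z W :=
    Finset.single_le_sum (f := fun k => frobNorm (gradLayer L ℓ' z W k) ^ 2)
      (fun _ _ => sq_nonneg _) (Finset.mem_range.2 hL)
  refine le_trans ?_ hterm
  rw [gradLayer_eq, frobNorm_sq_vecMulVec, prodUpTo, one_mulVec]
  have hf : ε / R ≤ vecNorm (topVec L W 1) := by
    obtain ⟨i, hi⟩ := hex
    have heq : wprod L W ⬝ᵥ z i = topVec L W 1 ⬝ᵥ (W 0 *ᵥ z i) := by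
      have h1 := prodFrom_mul_prodUpTo L W L le_rfl
      rw [prodFrom_self, Matrix.one_mul] at h1
      rw [wprod_dotProduct, topVec_dotProduct, h1, prodFrom_of_lt W (by omega), mulVec_mulVec]
    have h2 : vecNorm (W 0 *ᵥ z i) ≤ R * 1 := (vecNorm_mulVec_le _ _).trans
      (mul_le_mul (hW 0 (by omega)) (hz i) (vecNorm_nonneg _) hR.le)
    have h3 := (le_abs_self _).trans (abs_dotProduct_le (topVec L W 1) (W 0 *ᵥ z i))
    have h4 := mul_le_mul_of_nonneg_left h2 (vecNorm_nonneg (topVec L W 1))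
    rw [div_le_iff₀ hR]
    linarith
  have hg : γ * M ≤ vecNorm (gradRiskV ℓ' z (wprod L W)) := by
    have h1 := (neg_le_abs _).trans (abs_dotProduct_le usep (gradRiskV ℓ' z (wprod L W)))
    rw [hu, one_mul] at h1
    refine le_trans ?_ h1
    have h2 : -(usep ⬝ᵥ gradRiskV ℓ' z (wprod L W))
        = (n : ℝ)⁻¹ * ∑ i, (usep ⬝ᵥ z i) * (-ℓ' (wprod L W ⬝ᵥ z i)) := by
      simp only [gradRiskV, dotProduct_smul, dotProduct_sum, smul_eq_mul, ← mul_neg,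
        ← Finset.sum_neg_distrib]
      congr 1
      exact Finset.sum_congr rfl fun _ _ => by ring
    rw [h2]
    calc γ * M = (n : ℝ)⁻¹ * ∑ _i : Fin n, γ * M := by
          rw [Finset.sum_const, Finset.card_univ, Fintype.card_fin, nsmul_eq_mul]
          field_simp
      _ ≤ _ := by
          gcongr with i
          · exact hγ.le.trans (hmargin i)
          · exact hmargin i
          · exact hℓ' i
  gcongr

theorem stmt14
    (dim : ℕ → ℕ) (L n : ℕ) (hL : 1 ≤ L) (hdimL : dim L = 1) (hn : 0 < n)
    (x : Fin n → Fin (dim 0) → ℝ) (y : Fin n → ℝ) (z : Fin n → Fin (dim 0) → ℝ)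
    (hx : ∀ i, vecNorm (x i) ≤ 1) (hy : ∀ i, y i = 1 ∨ y i = -1)
    (hz : ∀ i, z i = y i • x i)
    (usep : Fin (dim 0) → ℝ) (husep_unit : vecNorm usep = 1)
    (husep : ∀ i, 0 < usep ⬝ᵥ z i)
    (ℓ ℓ' : ℝ → ℝ) (hderiv : ∀ s : ℝ, HasDerivAt ℓ (ℓ' s) s) (hcont : Continuous ℓ')
    (hneg : ∀ s : ℝ, ℓ' s < 0)
    (hbot : Tendsto ℓ atBot atTop) (htop : Tendsto ℓ atTop (nhds 0))
    (β G : ℝ) (hβ : ∀ a b : ℝ, |ℓ' a - ℓ' b| ≤ β * |a - b|) (hG : ∀ a : ℝ, |ℓ' a| ≤ G)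
    (R : ℝ) (hR : 1 ≤ R)
    (W : ℕ → Layers dim)
    (hGD : ∀ t : ℕ, ∀ k < L,
      W (t+1) k = W t k - (2 * (L : ℝ)^2 * R^(2*L-2) * (β + G))⁻¹ • gradLayer L ℓ' z (W t) k)
    (hinit_grad : ∃ k < L, gradLayer L ℓ' z (W 0) k ≠ 0)
    (hinit_risk : riskW L ℓ z (W 0) ≤ ℓ 0)
    :
    ∃ t : ℕ, ∃ k < L, R < frobNorm (W t k) := by
  by_contra! hball
  have hR0 : 0 < R := by linarith
  have hL1 : (1 : ℝ) ≤ L := by exact_mod_cast hL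
  have hn' : (0 : ℝ) < n := by exact_mod_cast hn
  have hβ0 : 0 ≤ β := by simpa using (abs_nonneg _).trans (hβ 1 0)
  have hG0 : 0 < G := (abs_pos.2 (hneg 0).ne).trans_le (hG 0)
  have hz1 : ∀ i, vecNorm (z i) ≤ 1 := fun i => vecNorm_z_le (hx i) (hy i) (hz i)
  set η := (2 * (L : ℝ)^2 * R^(2*L-2) * (β + G))⁻¹ with hη
  have hη0 : 0 < η := by positivity
  have hstep : ∀ t, riskW L ℓ z (W (t+1))
      ≤ riskW L ℓ z (W t) - η / 2 * gradNormSq L ℓ' z (W t) := fun t =>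
    risk_step hL hdimL hn z hz1 hβ0 hG0 hR hderiv hβ hG (W t) (W (t+1)) hη (hGD t)
      (hball t) (hball (t+1))
  have hS0 : ∀ t, 0 ≤ gradNormSq L ℓ' z (W t) := fun t =>
    Finset.sum_nonneg fun _ _ => sq_nonneg _
  have hanti : Antitone ℓ := antitone_of_hasDerivAt_nonpos hderiv fun s => (hneg s).le
  have hpos : ∀ s, 0 ≤ ℓ s := fun s => hanti.le_of_tendsto htop s
  have hrisk0 : ∀ V : Layers dim, 0 ≤ riskW L ℓ z V := fun V =>
    mul_nonneg (by positivity) (Finset.sum_nonneg fun _ _ => hpos _)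
  -- The nonzero initial gradient makes the risk drop strictly below `ℓ 0` after one step.
  have hrisk1 : riskW L ℓ z (W 1) < ℓ 0 := by
    obtain ⟨k, hk, hne⟩ := hinit_grad
    have h1 : 0 < gradNormSq L ℓ' z (W 0) :=
      (frobNorm_sq_pos hne).trans_le
        (Finset.single_le_sum (f := fun k => frobNorm (gradLayer L ℓ' z (W 0) k) ^ 2)
          (fun _ _ => sq_nonneg _) (Finset.mem_range.2 hk))
    have h2 := hstep 0
    have h3 : 0 < η / 2 * gradNormSq L ℓ' z (W 0) := by positivity
    rw [zero_add] at h2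
    linarith
  have hmono : ∀ t, riskW L ℓ z (W (t+1)) ≤ riskW L ℓ z (W 1) := by
    intro t
    induction t with
    | zero => exact le_rfl
    | succ t ih =>
      have := mul_nonneg (half_pos hη0).le (hS0 (t+1))
      linarith [hstep (t+1)]
  obtain ⟨ε, hε, hεrisk⟩ : ∃ ε > 0, riskW L ℓ z (W 1) < ℓ ε := by
    have h1 : ∀ᶠ s in nhds (0 : ℝ), riskW L ℓ z (W 1) < ℓ s :=
      (hderiv 0).continuousAt.eventually (lt_mem_nhds hrisk1)
    have h2 : ∀ᶠ s in nhdsWithin (0 : ℝ) (Set.Ioi 0), riskW L ℓ z (W 1) < ℓ s :=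
      h1.filter_mono nhdsWithin_le_nhds
    obtain ⟨s, hs, hs0⟩ := (h2.and self_mem_nhdsWithin).exists
    exact ⟨s, hs0, hs⟩
  have hex : ∀ t, ∃ i, ε ≤ wprod L (W (t+1)) ⬝ᵥ z i := by
    intro t
    by_contra! hlt
    have h1 : ℓ ε ≤ riskW L ℓ z (W (t+1)) := by
      calc ℓ ε = (n : ℝ)⁻¹ * ∑ _i : Fin n, ℓ ε := by
            rw [Finset.sum_const, Finset.card_univ, Fintype.card_fin, nsmul_eq_mul]
            field_simp
        _ ≤ _ := mul_le_mul_of_nonneg_left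
            (Finset.sum_le_sum fun i _ => hanti (hlt i).le) (by positivity)
    linarith [hmono t]
  -- The margins stay in a compact interval, where `-ℓ'` has a positive minimum.
  obtain ⟨s₀, -, hs₀⟩ := (isCompact_Icc (a := -R ^ L) (b := R ^ L)).exists_isMinOn
    ⟨0, by simp [hR0.le], by positivity⟩ hcont.neg.continuousOn
  have hM : ∀ t i, -ℓ' s₀ ≤ -ℓ' (wprod L (W t) ⬝ᵥ z i) := by
    intro t i
    apply hs₀
    rw [Set.mem_Icc, ← abs_le, wprod_dotProduct]
    exact (abs_sum_le_vecNorm hdimL _).trans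
      (prodUpTo_bound hR0.le (W t) (hball t) (z i) (hz1 i) L le_rfl)
  have : Nonempty (Fin n) := ⟨⟨0, hn⟩⟩
  obtain ⟨i₀, hi₀⟩ := Finite.exists_min fun i => usep ⬝ᵥ z i
  set c := (ε / R) ^ 2 * (usep ⬝ᵥ z i₀ * -ℓ' s₀) ^ 2 with hc
  have hM0 : 0 < -ℓ' s₀ := neg_pos.2 (hneg s₀)
  have hγ0 := husep i₀
  have hc0 : 0 < c := by positivity
  have hlow : ∀ t, c ≤ gradNormSq L ℓ' z (W (t+1)) := fun t =>
    gradNormSq_lower hL hn z hz1 hR0 hε hγ0 hM0 usep husep_unit hi₀ (W (t+1)) (hball (t+1))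
      (hM (t+1)) (hex t)
  have htel : ∀ t : ℕ, riskW L ℓ z (W (t+1)) ≤ riskW L ℓ z (W 1) - t * (η / 2 * c) := by
    intro t
    induction t with
    | zero => simp
    | succ t ih =>
      have h1 := mul_le_mul_of_nonneg_left (hlow t) (half_pos hη0).le
      have h2 := hstep (t+1)
      push_cast
      linarith
  obtain ⟨t, ht⟩ := exists_nat_gt (riskW L ℓ z (W 1) / (η / 2 * c))
  rw [div_lt_iff₀ (by positivity)] at ht
  linarith [htel t, hrisk0 (W (t+1))]

end
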